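/- arXiv:1208.5521 — 3 statements merged into one kernel-verified Lean document; each statement's English description precedes it below -/
import Mathlib

section
/- If H^h(X) = 0 for a Hausdorff function h, then there exists a Hausdorff function g with lim_{r→0+} h(r)/g(r) = 0 such that H^g(X) = 0. -/
open Set Filter MeasureTheory ENNReal

/-- A Hausdorff (gauge) function: nondecreasing, right-continuous on `[0,∞)`,
vanishing exactly at `0`. -/
def IsHausdorffFn (h : ℝ → ℝ) : Prop :=
  (∀ r, 0 ≤ r → 0 ≤ h r) ∧ MonotoneOn h (Set.Ici 0) ∧
  (∀ r, 0 ≤ r → ContinuousWithinAt h (Set.Ici r) r) ∧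
  ∀ r, 0 ≤ r → (h r = 0 ↔ r = 0)

/-- The `h`-dimensional Hausdorff measure associated to a gauge function `h`. -/
noncomputable def hMeas (h : ℝ → ℝ) {X : Type*} [EMetricSpace X] [MeasurableSpace X]
    [BorelSpace X] : Measure X :=
  Measure.mkMetric (fun r => ENNReal.ofReal (h r.toReal))

/-!
The vanishing of `H^h` on `s` is equivalent to the existence of countable covers of `s`, of mesh
tending to zero, for which the `h`-values of the diameters of all covering sets together form one
summable family `a`. Truncated sums `∑ i, min (a i) c` tend to `0` with `c`, so there are levels
`c j > 0`, themselves summable, for which `∑ i, min (a i) (c j)` is summable in `j`. The function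
`φ x = ∑ j, min x (c j)` then has `∑ i, φ (a i) < ∞`, while `φ x ≥ n x` once `x` is below `n` of
the levels, so `x / φ x → 0`. The covers witnessing `H^h(s) = 0` hence also witness `H^g(s) = 0`
for `g = φ ∘ h`, and `h / g → 0`.
-/

open Topology Asymptotics

namespace IsHausdorffFn

variable {h φ : ℝ → ℝ}

theorem map_zero (hh : IsHausdorffFn h) : h 0 = 0 :=
  (hh.2.2.2 0 le_rfl).2 rfl

theorem pos (hh : IsHausdorffFn h) {r : ℝ} (hr : 0 < r) : 0 < h r :=
  (hh.1 r hr.le).lt_of_ne' ((hh.2.2.2 r hr.le).not.2 hr.ne')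

theorem tendsto_nhdsGT_zero (hh : IsHausdorffFn h) : Tendsto h (𝓝[>] 0) (𝓝[>] 0) := by
  refine tendsto_nhdsWithin_iff.2 ⟨?_, eventually_mem_nhdsWithin.mono fun r hr => hh.pos hr⟩
  have hlim := (hh.2.2.1 0 le_rfl).tendsto.mono_left (nhdsWithin_mono 0 Ioi_subset_Ici_self)
  rwa [hh.map_zero] at hlim

theorem comp (hφ : IsHausdorffFn φ) (hh : IsHausdorffFn h) : IsHausdorffFn (φ ∘ h) := by
  obtain ⟨φnonneg, φmono, φcont, φzero⟩ := hφ
  obtain ⟨hnonneg, hmono, hcont, hzero⟩ := hh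
  refine ⟨fun r hr => φnonneg _ (hnonneg r hr), φmono.comp hmono hnonneg, fun r hr => ?_,
    fun r hr => (φzero _ (hnonneg r hr)).trans (hzero r hr)⟩
  have hmaps : MapsTo h (Ici r) (Ici (h r)) := fun x hx => hmono hr (hr.trans hx) hx
  exact (φcont _ (hnonneg r hr)).comp (hcont r hr) hmaps

end IsHausdorffFn

/-- The sum `∑ j, min x (c j)` of the truncations of `x` at the levels `c j`. Applied after a gauge,
it yields a gauge of slower decay at `0`. It is meant for `0 ≤ x` and summable `c ≥ 0`; for `x < 0`
and infinite `κ` the series diverges and the value is the junk value `0`. -/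
noncomputable def truncationSum {κ : Type*} (c : κ → ℝ) (x : ℝ) : ℝ :=
  ∑' j, min x (c j)

section TruncationSum

variable {ι κ : Type*} {a : ι → ℝ} {c : κ → ℝ}

theorem summable_min_const_left (hc : ∀ j, 0 ≤ c j) (hs : Summable c) {x : ℝ} (hx : 0 ≤ x) :
    Summable fun j => min x (c j) :=
  hs.of_nonneg_of_le (fun j => le_min hx (hc j)) fun _ => min_le_right _ _

theorem truncationSum_zero (hc : ∀ j, 0 ≤ c j) : truncationSum c 0 = 0 := by
  simp [truncationSum, hc]

theorem truncationSum_pos [Nonempty κ] (hc : ∀ j, 0 < c j) (hs : Summable c) {x : ℝ}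
    (hx : 0 < x) : 0 < truncationSum c x :=
  (summable_min_const_left (fun j => (hc j).le) hs hx.le).tsum_pos
    (fun j => (lt_min hx (hc j)).le) (Classical.arbitrary κ) (lt_min hx (hc _))

theorem monotoneOn_truncationSum (hc : ∀ j, 0 ≤ c j) (hs : Summable c) :
    MonotoneOn (truncationSum c) (Ici 0) := fun _ hx _ hy hxy =>
  (summable_min_const_left hc hs hx).tsum_le_tsum (fun _ => min_le_min_right _ hxy)
    (summable_min_const_left hc hs hy)

theorem continuousOn_truncationSum (hc : ∀ j, 0 ≤ c j) (hs : Summable c) :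
    ContinuousOn (truncationSum c) (Ici 0) := by
  refine continuousOn_tsum (fun j => by fun_prop) hs fun j x hx => ?_
  rw [Real.norm_of_nonneg (le_min hx (hc j))]
  exact min_le_right _ _

theorem isHausdorffFn_truncationSum [Nonempty κ] (hc : ∀ j, 0 < c j) (hs : Summable c) :
    IsHausdorffFn (truncationSum c) := by
  have hc' : ∀ j, 0 ≤ c j := fun j => (hc j).le
  refine ⟨fun x hx => tsum_nonneg fun j => le_min hx (hc' j), monotoneOn_truncationSum hc' hs,
    fun x hx => (continuousOn_truncationSum hc' hs x hx).mono (Ici_subset_Ici.2 hx),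
    fun x hx => ⟨fun hzero => ?_, fun hzero => hzero ▸ truncationSum_zero hc'⟩⟩
  by_contra hne
  exact (truncationSum_pos hc hs (hx.lt_of_ne' hne)).ne' hzero

theorem card_mul_le_truncationSum (hc : ∀ j, 0 ≤ c j) (hs : Summable c) {x : ℝ} (hx : 0 ≤ x)
    {F : Finset κ} (hF : ∀ j ∈ F, x ≤ c j) : F.card * x ≤ truncationSum c x :=
  calc F.card * x = ∑ j ∈ F, min x (c j) := by
        rw [Finset.sum_congr rfl fun j hj => min_eq_left (hF j hj), Finset.sum_const, nsmul_eq_mul]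
    _ ≤ truncationSum c x :=
        (summable_min_const_left hc hs hx).sum_le_tsum F fun j _ => le_min hx (hc j)

theorem id_isLittleO_truncationSum [Infinite κ] (hc : ∀ j, 0 < c j) (hs : Summable c) :
    id =o[𝓝[>] 0] truncationSum c := by
  refine isLittleO_iff_nat_mul_le.2 fun n => ?_
  obtain ⟨F, rfl⟩ := Infinite.exists_subset_card_eq κ n
  have hsmall : ∀ᶠ x in 𝓝[>] (0 : ℝ), ∀ j ∈ F, x ≤ c j :=
    (eventually_all_finset F).2 fun j _ => nhdsWithin_le_nhds (eventually_le_nhds (hc j))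
  filter_upwards [hsmall, self_mem_nhdsWithin] with x hxF hx
  rw [id, Real.norm_of_nonneg (le_of_lt hx), Real.norm_of_nonneg (truncationSum_pos hc hs hx).le]
  exact card_mul_le_truncationSum (fun j => (hc j).le) hs (le_of_lt hx) hxF

theorem summable_truncationSum_comp (ha : ∀ i, 0 ≤ a i) (hs : Summable a) (hc : ∀ j, 0 ≤ c j)
    (hac : Summable fun j => ∑' i, min (a i) (c j)) : Summable fun i => truncationSum c (a i) := by
  have hnonneg : ∀ p : κ × ι, 0 ≤ min (a p.2) (c p.1) := fun p => le_min (ha p.2) (hc p.1)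
  have hprod : Summable fun p : κ × ι => min (a p.2) (c p.1) :=
    (summable_prod_of_nonneg hnonneg).2
      ⟨fun j => hs.of_nonneg_of_le (fun i => hnonneg (j, i)) fun _ => min_le_left _ _, hac⟩
  exact hprod.prod_symm.prod

theorem tendsto_tsum_min_nhdsGT_zero (ha : ∀ i, 0 ≤ a i) (hs : Summable a) :
    Tendsto (fun x => ∑' i, min (a i) x) (𝓝[>] 0) (𝓝 0) := by
  have hterm (i : ι) : Tendsto (fun x => min (a i) x) (𝓝[>] 0) (𝓝 0) := by
    have hcont : Continuous fun x => min (a i) x := by fun_prop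
    simpa only [min_eq_right (ha i)] using (hcont.tendsto 0).mono_left nhdsWithin_le_nhds
  have hbound : ∀ᶠ x in 𝓝[>] (0 : ℝ), ∀ i, ‖min (a i) x‖ ≤ a i := by
    filter_upwards [self_mem_nhdsWithin] with x hx i
    rw [Real.norm_of_nonneg (le_min (ha i) (le_of_lt hx))]
    exact min_le_left _ _
  simpa only [tsum_zero] using tendsto_tsum_of_dominated_convergence hs hterm hbound

theorem exists_pos_le_tsum_min_le (ha : ∀ i, 0 ≤ a i) (hs : Summable a) {ε : ℝ} (hε : 0 < ε) :
    ∃ x, 0 < x ∧ x ≤ ε ∧ ∑' i, min (a i) x ≤ ε := by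
  have hpos : ∀ᶠ x in 𝓝[>] (0 : ℝ), 0 < x := eventually_mem_nhdsWithin
  have hle : ∀ᶠ x in 𝓝[>] (0 : ℝ), x ≤ ε := (eventually_le_nhds hε).filter_mono nhdsWithin_le_nhds
  have hsum := (tendsto_tsum_min_nhdsGT_zero ha hs).eventually_le_const hε
  exact (hpos.and (hle.and hsum)).exists

theorem exists_isHausdorffFn_summable_comp (ha : ∀ i, 0 ≤ a i) (hs : Summable a) :
    ∃ φ, IsHausdorffFn φ ∧ id =o[𝓝[>] 0] φ ∧ Summable fun i => φ (a i) := by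
  choose c hcpos hcle hac using fun j : ℕ =>
    exists_pos_le_tsum_min_le ha hs (ε := (1 / 2) ^ j) (by positivity)
  have hcs : Summable c := summable_geometric_two.of_nonneg_of_le (fun j => (hcpos j).le) hcle
  have hacs : Summable fun j => ∑' i, min (a i) (c j) :=
    summable_geometric_two.of_nonneg_of_le
      (fun j => tsum_nonneg fun i => le_min (ha i) (hcpos j).le) hac
  exact ⟨truncationSum c, isHausdorffFn_truncationSum hcpos hcs,
    id_isLittleO_truncationSum hcpos hcs,
    summable_truncationSum_comp ha hs (fun j => (hcpos j).le) hacs⟩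

end TruncationSum

/-- `t k` is, for every `k`, a countable cover of `s` by sets of diameter at most `1 / k`; such
sequences witness the vanishing of Hausdorff measures. As `0⁻¹ = ∞` in `ℝ≥0∞`, the sets of the
cover `t 0` are arbitrary. -/
structure IsFineCoverSeq {X : Type*} [PseudoEMetricSpace X] (t : ℕ → ℕ → Set X) (s : Set X) :
    Prop where
  subset_iUnion : ∀ k, s ⊆ ⋃ n, t k n
  ediam_le : ∀ k n, Metric.ediam (t k n) ≤ (k : ℝ≥0∞)⁻¹

theorem tsum_ofReal_ne_top_iff_summable {ι : Type*} {f : ι → ℝ} (hf : ∀ i, 0 ≤ f i) :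
    ∑' i, ENNReal.ofReal (f i) ≠ ∞ ↔ Summable f := by
  refine ⟨fun hne => ?_, Summable.tsum_ofReal_ne_top⟩
  simpa only [ENNReal.toReal_ofReal (hf _)] using ENNReal.summable_toReal hne

section MkMetric

variable {X : Type*} [EMetricSpace X] [MeasurableSpace X] [BorelSpace X] {s : Set X}

theorem exists_cover_tsum_lt_of_mkMetric_eq_zero {m : ℝ≥0∞ → ℝ≥0∞} (hm : m 0 = 0)
    (hs : Measure.mkMetric m s = 0) {δ ε : ℝ≥0∞} (hδ : 0 < δ) (hε : 0 < ε) :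
    ∃ t : ℕ → Set X, s ⊆ ⋃ n, t n ∧ (∀ n, Metric.ediam (t n) ≤ δ) ∧
      ∑' n, m (Metric.ediam (t n)) < ε := by
  rw [Measure.mkMetric_apply] at hs
  have hlt := (iSup₂_le_iff.1 hs.le δ hδ).trans_lt hε
  simp only [iInf_lt_iff] at hlt
  obtain ⟨t, hcov, hdiam, hsum⟩ := hlt
  have hterm (n : ℕ) : ⨆ _ : (t n).Nonempty, m (Metric.ediam (t n)) = m (Metric.ediam (t n)) := by
    rcases (t n).eq_empty_or_nonempty with hn | hn
    · simp [hn, hm]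
    · simp [hn]
  simp only [hterm] at hsum
  exact ⟨t, hcov, hdiam, hsum⟩

theorem exists_isFineCoverSeq_of_mkMetric_eq_zero {m : ℝ≥0∞ → ℝ≥0∞} (hm : m 0 = 0)
    (hs : Measure.mkMetric m s = 0) :
    ∃ t, IsFineCoverSeq t s ∧ ∑' p : ℕ × ℕ, m (Metric.ediam (t p.1 p.2)) ≠ ∞ := by
  obtain ⟨ε, hεpos, hεsum⟩ := ENNReal.exists_pos_sum_of_countable' one_ne_zero ℕ
  choose t hcov hdiam hlt using fun k : ℕ =>
    exists_cover_tsum_lt_of_mkMetric_eq_zero hm hs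
      (ENNReal.inv_pos.2 (ENNReal.natCast_ne_top k)) (hεpos k)
  refine ⟨t, ⟨hcov, hdiam⟩, ?_⟩
  rw [ENNReal.tsum_prod']
  exact ((ENNReal.tsum_le_tsum fun k => (hlt k).le).trans_lt (hεsum.trans one_lt_top)).ne

theorem IsFineCoverSeq.mkMetric_eq_zero {t : ℕ → ℕ → Set X} (ht : IsFineCoverSeq t s)
    {m : ℝ≥0∞ → ℝ≥0∞} (hm : ∑' p : ℕ × ℕ, m (Metric.ediam (t p.1 p.2)) ≠ ∞) :
    Measure.mkMetric m s = 0 := by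
  rw [ENNReal.tsum_prod'] at hm
  refine nonpos_iff_eq_zero.1 ?_
  calc Measure.mkMetric m s ≤ liminf (fun k => ∑' n, m (Metric.ediam (t k n))) atTop :=
        Measure.mkMetric_le_liminf_tsum s _ ENNReal.tendsto_inv_nat_nhds_zero t
          (Eventually.of_forall ht.ediam_le) (Eventually.of_forall ht.subset_iUnion) m
    _ = 0 := (ENNReal.tendsto_atTop_zero_of_tsum_ne_top hm).liminf_eq

theorem hMeas_eq_zero_iff_exists_isFineCoverSeq {h : ℝ → ℝ} (hh : IsHausdorffFn h) :
    hMeas h s = 0 ↔ ∃ t, IsFineCoverSeq t s ∧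
      Summable fun p : ℕ × ℕ => h (Metric.ediam (t p.1 p.2)).toReal := by
  simp only [← tsum_ofReal_ne_top_iff_summable fun _ => hh.1 _ ENNReal.toReal_nonneg]
  refine ⟨exists_isFineCoverSeq_of_mkMetric_eq_zero ?_,
    fun ⟨t, ht, hsum⟩ => ht.mkMetric_eq_zero hsum⟩
  rw [ENNReal.toReal_zero, hh.map_zero, ENNReal.ofReal_zero]

end MkMetric

theorem stmt5_general {X : Type*} [EMetricSpace X] [MeasurableSpace X] [BorelSpace X] {s : Set X}
    {h : ℝ → ℝ} (hh : IsHausdorffFn h) (hs : hMeas h s = 0) :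
    ∃ g : ℝ → ℝ, IsHausdorffFn g ∧ Tendsto (fun r => h r / g r) (𝓝[>] 0) (𝓝 0) ∧
      hMeas g s = 0 := by
  obtain ⟨t, ht, hsum⟩ := (hMeas_eq_zero_iff_exists_isFineCoverSeq hh).1 hs
  obtain ⟨φ, hφ, hφo, hφsum⟩ :=
    exists_isHausdorffFn_summable_comp (fun _ => hh.1 _ ENNReal.toReal_nonneg) hsum
  have hg : IsHausdorffFn (φ ∘ h) := hφ.comp hh
  exact ⟨φ ∘ h, hg, (hφo.comp_tendsto hh.tendsto_nhdsGT_zero).tendsto_div_nhds_zero,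
    (hMeas_eq_zero_iff_exists_isFineCoverSeq hg).2 ⟨t, ht, hφsum⟩⟩

/-- If `H^h(X) = 0`, then there is a gauge `g` with `g ≺ h` (i.e. `h(r)/g(r) → 0` as
`r → 0+`) such that `H^g(X) = 0`. -/
theorem stmt5 {X : Type*} [MetricSpace X] [MeasurableSpace X] [BorelSpace X]
    (h : ℝ → ℝ) (hh : IsHausdorffFn h) (h0 : hMeas h (Set.univ : Set X) = 0) :
    ∃ g : ℝ → ℝ, IsHausdorffFn g ∧
      Filter.Tendsto (fun r => h r / g r) (nhdsWithin 0 (Set.Ioi 0)) (nhds 0) ∧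
      hMeas g (Set.univ : Set X) = 0 :=
  stmt5_general hh h0
end

section
/- For every Hausdorff function h with lim_{r→0+} h(r)/r = ∞ there exists an infinite set I ⊆ ℕ such that the compact set C_I = {x ∈ 2^ℕ : x↾I ≡ 0} satisfies H^h(C_I) > 0. -/
open Set Filter MeasureTheory ENNReal

/-- Cantor space `2^ℕ` with the metric `d(x,y) = 2^{-min{i : x i ≠ y i}}`. -/
noncomputable instance : MetricSpace (ℕ → Bool) :=
  PiNat.metricSpaceOfDiscreteUniformity fun _ => rfl

/-!
Toss fair coins off `I` and put `false` on `I`. The resulting probability measure lives on `C_I`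
and gives a cylinder of length `n` mass at most `2 ^ |I ∩ [0, n)| * 2⁻ⁿ`. If `I` is sparse enough
that `2 ^ |I ∩ [0, n)| ≤ h (2⁻ⁿ) / 2⁻ⁿ` eventually, the mass of a small cylinder is at most
`h (2⁻ⁿ)`. A set with at least two points lies in a cylinder of the same diameter, and singletons
are null once also `2 ^ |I ∩ [0, n)| ≤ n` eventually, so the mass distribution principle bounds
the Hausdorff measure of `C_I` below by `1`.
-/

open PiNat (firstDiff)

section Cylinder

lemma exists_subset_cylinder_firstDiff {E : ℕ → Type*} {t : Set (∀ n, E n)}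
    (ht : t.Nontrivial) :
    ∃ x ∈ t, ∃ y ∈ t, x ≠ y ∧ t ⊆ PiNat.cylinder x (firstDiff x y) := by
  obtain ⟨x, hx, y, hy, hxy⟩ := ht
  obtain ⟨⟨a, b⟩, ⟨ha, hb, hab⟩, hmin⟩ :=
    exists_minimalFor_of_wellFoundedLT (· ∈ t.offDiag) (fun p => firstDiff p.1 p.2)
      ⟨(x, y), hx, hy, hxy⟩
  refine ⟨a, ha, b, hb, hab, fun z hz => ?_⟩
  rcases eq_or_ne z a with rfl | hza
  · exact PiNat.self_mem_cylinder z _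
  · exact (PiNat.mem_cylinder_iff_le_firstDiff hza _).2
      ((le_total _ _).elim id (hmin (j := (z, a)) ⟨hz, ha, hza⟩))

lemma measure_cylinder_infinitePi {E : ℕ → Type*} [∀ n, MeasurableSpace (E n)]
    [∀ n, MeasurableSingletonClass (E n)] (μ : ∀ n, Measure (E n))
    [∀ n, IsProbabilityMeasure (μ n)] (x : ∀ n, E n) (n : ℕ) :
    Measure.infinitePi μ (PiNat.cylinder x n) = ∏ i ∈ Finset.range n, μ i {x i} := by
  rw [PiNat.cylinder_eq_pi, Measure.infinitePi_pi _ fun i _ => measurableSet_singleton _]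

lemma nullSingletonClass_of_tendsto_measure_cylinder {E : ℕ → Type*} [∀ n, MeasurableSpace (E n)]
    {μ : Measure (∀ n, E n)} (hμ : ∀ x, Tendsto (fun n => μ (PiNat.cylinder x n)) atTop (nhds 0)) :
    NullSingletonClass μ where
  measure_singleton x := le_zero_iff.1 <| ge_of_tendsto' (hμ x) fun n =>
    measure_mono <| singleton_subset_iff.2 <| PiNat.self_mem_cylinder x n

end Cylinder

lemma ae_infinitePi_forall {ι : Type*} [Countable ι] {X : ι → Type*}
    [∀ i, MeasurableSpace (X i)] (μ : ∀ i, Measure (X i)) [∀ i, IsProbabilityMeasure (μ i)]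
    {p : ∀ i, X i → Prop} (hp : ∀ i, ∀ᵐ y ∂μ i, p i y) :
    ∀ᵐ x ∂Measure.infinitePi μ, ∀ i, p i (x i) :=
  ae_all_iff.2 fun i =>
    (measurePreserving_eval_infinitePi μ i).quasiMeasurePreserving.ae (hp i)

open scoped Classical in
lemma exists_infinite_eventually_count_le {α : Type*} [Preorder α] {u : ℕ → α}
    (hu : Tendsto u atTop atTop) (φ : ℕ → α) :
    ∃ I : Set ℕ, I.Infinite ∧ ∀ᶠ n in atTop, φ (Nat.count (· ∈ I) n) ≤ u n := by
  obtain ⟨f, hf, hfu⟩ := extraction_forall_of_eventually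
    (P := fun k N => ∀ n ≥ N, φ (k + 1) ≤ u n)
    fun k => eventually_forall_ge_atTop.2 (hu.eventually_ge_atTop _)
  have hinf : (range f).Infinite := infinite_range_of_injective hf.injective
  have hnth : Nat.nth (· ∈ range f) = f :=
    ((Nat.nth_strictMono hinf).range_inj hf).1 (Nat.range_nth_of_infinite hinf)
  refine ⟨range f, hinf, ?_⟩
  filter_upwards [hu.eventually_ge_atTop (φ 0)] with n hn
  rcases hc : Nat.count (· ∈ range f) n with _ | c
  · exact hn
  · have hlt : f c < n := hnth ▸ Nat.nth_lt_of_lt_count (hc ▸ c.lt_succ_self)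
    exact hfu c n hlt.le

section MassDistribution

lemma edist_eq_inv_two_pow_firstDiff {x y : ℕ → Bool} (hxy : x ≠ y) :
    edist x y = 2⁻¹ ^ firstDiff x y := by
  have hdist : dist x y = (1 / 2 : ℝ) ^ firstDiff x y := PiNat.dist_eq_of_ne hxy
  rw [edist_dist, hdist, ofReal_pow (by positivity), one_div, ofReal_inv_of_pos two_pos,
    ofReal_ofNat]

lemma ediam_cylinder_le (x : ℕ → Bool) (n : ℕ) : Metric.ediam (PiNat.cylinder x n) ≤ 2⁻¹ ^ n := by
  refine Metric.ediam_le fun y hy z hz => ?_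
  rcases eq_or_ne y z with rfl | hyz
  · simp
  · have hn : n ≤ firstDiff y z := by
      rw [← PiNat.mem_cylinder_iff_le_firstDiff hyz, PiNat.mem_cylinder_iff_eq.1 hz]
      exact hy
    rw [edist_eq_inv_two_pow_firstDiff hyz]
    exact pow_le_pow_right_of_le_one' (by simp) hn

lemma exists_subset_cylinder_ediam_eq {t : Set (ℕ → Bool)} (ht : t.Nontrivial) :
    ∃ x n, t ⊆ PiNat.cylinder x n ∧ Metric.ediam t = 2⁻¹ ^ n := by
  obtain ⟨x, hx, y, hy, hxy, hsub⟩ := exists_subset_cylinder_firstDiff ht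
  refine ⟨x, firstDiff x y, hsub, le_antisymm ?_ ?_⟩
  · exact (Metric.ediam_mono hsub).trans (ediam_cylinder_le _ _)
  · rw [← edist_eq_inv_two_pow_firstDiff hxy]
    exact Metric.edist_le_ediam_of_mem hx hy

lemma le_mkMetric_of_measure_cylinder_le {m : ℝ≥0∞ → ℝ≥0∞} {μ : Measure (ℕ → Bool)}
    [NullSingletonClass μ]
    (hμ : ∀ᶠ n in atTop, ∀ x, μ (PiNat.cylinder x n) ≤ m (2⁻¹ ^ n)) :
    μ ≤ Measure.mkMetric m := by
  obtain ⟨N, hN⟩ := eventually_atTop.1 hμ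
  refine Measure.le_mkMetric m μ (2⁻¹ ^ N) (ENNReal.pow_pos (by simp) N) fun t ht => ?_
  rcases t.subsingleton_or_nontrivial with hsub | hnon
  · exact (hsub.measure_zero μ).trans_le zero_le
  · obtain ⟨x, n, hcyl, hdiam⟩ := exists_subset_cylinder_ediam_eq hnon
    have hNn : N ≤ n := by
      rw [hdiam, ← ENNReal.inv_pow, ← ENNReal.inv_pow, ENNReal.inv_le_inv] at ht
      exact (Nat.pow_le_pow_iff_right one_lt_two).1 (mod_cast ht)
    calc μ t ≤ μ (PiNat.cylinder x n) := measure_mono hcyl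
      _ ≤ m (2⁻¹ ^ n) := hN n hNn x
      _ = m (Metric.ediam t) := by rw [hdiam]

end MassDistribution

section CoinMeasure

open scoped Classical in
/-- The law of the `i`-th coordinate under `coinMeasure I`: the point mass at `false` for `i ∈ I`,
a fair coin otherwise. -/
noncomputable def coordLaw (I : Set ℕ) (i : ℕ) : PMF Bool :=
  if i ∈ I then PMF.pure false else PMF.uniformOfFintype Bool

/-- The law of a sequence of independent fair coins whose values at the indices in `I` have been
replaced by `false`; it is the natural probability measure on `C_I`. -/
noncomputable def coinMeasure (I : Set ℕ) : Measure (ℕ → Bool) :=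
  Measure.infinitePi fun i => (coordLaw I i).toMeasure

instance (I : Set ℕ) : IsProbabilityMeasure (coinMeasure I) := by
  unfold coinMeasure; infer_instance

variable (I : Set ℕ)

open scoped Classical in
lemma coordLaw_singleton_le (i : ℕ) (b : Bool) :
    (coordLaw I i).toMeasure {b} ≤ (if i ∈ I then 2 else 1) * 2⁻¹ := by
  rw [PMF.toMeasure_apply_singleton _ _ (measurableSet_singleton b)]
  by_cases hi : i ∈ I
  · simpa [hi, ENNReal.mul_inv_cancel] using (coordLaw I i).coe_le_one b
  · simp [coordLaw, hi, PMF.uniformOfFintype_apply]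

open scoped Classical in
lemma coinMeasure_cylinder_le (x : ℕ → Bool) (n : ℕ) :
    coinMeasure I (PiNat.cylinder x n) ≤ 2 ^ Nat.count (· ∈ I) n * 2⁻¹ ^ n := by
  calc coinMeasure I (PiNat.cylinder x n)
      = ∏ i ∈ Finset.range n, (coordLaw I i).toMeasure {x i} :=
        measure_cylinder_infinitePi _ x n
    _ ≤ ∏ i ∈ Finset.range n, (if i ∈ I then 2 else 1) * 2⁻¹ :=
        Finset.prod_le_prod' fun i _ => coordLaw_singleton_le I i (x i)
    _ = 2 ^ Nat.count (· ∈ I) n * 2⁻¹ ^ n := by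
        rw [Finset.prod_mul_distrib, Finset.prod_ite, Nat.count_eq_card_filter_range]
        simp

variable {I} in
open scoped Classical in
lemma coinMeasure_cylinder_le_ofReal {n : ℕ} {a : ℝ}
    (ha : 2 ^ Nat.count (· ∈ I) n ≤ a / 2⁻¹ ^ n) (x : ℕ → Bool) :
    coinMeasure I (PiNat.cylinder x n) ≤ ENNReal.ofReal a := by
  refine (coinMeasure_cylinder_le I x n).trans ?_
  rw [le_div_iff₀ (by positivity)] at ha
  simpa [ofReal_mul, ofReal_pow, ofReal_inv_of_pos, ENNReal.inv_pow] using ofReal_le_ofReal ha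

variable {I} in
open scoped Classical in
lemma nullSingletonClass_coinMeasure
    (hI : ∀ᶠ n : ℕ in atTop, (2 : ℝ) ^ Nat.count (· ∈ I) n ≤ n) :
    NullSingletonClass (coinMeasure I) := by
  have hlim : Tendsto (fun n : ℕ => ENNReal.ofReal (n * 2⁻¹ ^ n)) atTop (nhds 0) := by
    simpa using ENNReal.tendsto_ofReal
      (tendsto_self_mul_const_pow_of_lt_one (r := 2⁻¹) (by norm_num) (by norm_num))
  refine nullSingletonClass_of_tendsto_measure_cylinder fun x =>
    tendsto_of_tendsto_of_tendsto_of_le_of_le' tendsto_const_nhds hlim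
      (Eventually.of_forall fun _ => zero_le) ?_
  filter_upwards [hI] with n hn
  exact coinMeasure_cylinder_le_ofReal (by simpa using hn) x

lemma coinMeasure_forall_eq_false : coinMeasure I {x | ∀ i ∈ I, x i = false} = 1 := by
  have hcoord : ∀ i, ∀ᵐ b ∂(coordLaw I i).toMeasure, i ∈ I → b = false := by
    intro i
    by_cases hi : i ∈ I <;> simp [coordLaw, hi, PMF.toMeasure_pure, ae_dirac_eq]
  rw [← measure_univ (μ := coinMeasure I)]
  exact measure_congr (eventuallyEq_univ.2 (ae_infinitePi_forall _ hcoord))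

end CoinMeasure

theorem stmt11_general (h : ℝ → ℝ)
    (hlim : Tendsto (fun r => h r / r) (nhdsWithin 0 (Ioi 0)) atTop) :
    ∃ I : Set ℕ, I.Infinite ∧ 0 < hMeas h {x : ℕ → Bool | ∀ i ∈ I, x i = false} := by
  have hpow : Tendsto (fun n : ℕ => (2⁻¹ : ℝ) ^ n) atTop (nhdsWithin 0 (Ioi 0)) :=
    tendsto_pow_atTop_nhdsWithin_zero_of_lt_one (by norm_num) (by norm_num)
  have hu : Tendsto (fun n : ℕ => (h (2⁻¹ ^ n) / 2⁻¹ ^ n, (n : ℝ))) atTop atTop := by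
    rw [← prod_atTop_atTop_eq]
    exact (hlim.comp hpow).prodMk tendsto_natCast_atTop_atTop
  obtain ⟨I, hI, hcount⟩ := exists_infinite_eventually_count_le hu fun k => (2 ^ k, 2 ^ k)
  have hnull : NullSingletonClass (coinMeasure I) :=
    nullSingletonClass_coinMeasure (hcount.mono fun _ hn => hn.2)
  have hle : coinMeasure I ≤ hMeas h := le_mkMetric_of_measure_cylinder_le <| by
    filter_upwards [hcount] with n hn x
    simpa using coinMeasure_cylinder_le_ofReal hn.1 x
  have hpos : 0 < coinMeasure I {x | ∀ i ∈ I, x i = false} := by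
    simp [coinMeasure_forall_eq_false]
  exact ⟨I, hI, hpos.trans_le (hle _)⟩

/-- For every Hausdorff function `h` with `h(r)/r → ∞` as `r → 0+` (i.e. `h ≺ 1`) there is
an infinite `I ⊆ ℕ` with `H^h(C_I) > 0`. -/
theorem stmt11 (h : ℝ → ℝ) (hh : IsHausdorffFn h)
    (hlim : Filter.Tendsto (fun r => h r / r) (nhdsWithin 0 (Set.Ioi 0)) Filter.atTop) :
    ∃ I : Set ℕ, I.Infinite ∧
      0 < hMeas h {x : ℕ → Bool | ∀ i ∈ I, x i = false} :=
  stmt11_general h hlim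
end

section
/- If X is a subset of Cantor space such that H^1(X × C) = 0 for every set C = C_I = {x ∈ 2^ℕ : x↾I ≡ 0} with I ⊆ ℕ infinite, then X has strong measure zero. -/
open Set Filter MeasureTheory ENNReal

/-!
Let `I` be infinite but so sparse that `|I ∩ m|` tends to infinity very slowly. Let `ν` be the
uniform probability measure on `C_I`, so that `2^{-|I ∩ m|} ν(D) ≤ 2^{-m}` for every cylinder
`D` of length `m`. Since `X × C_I` is `H^1`-null, it is covered by sets `A k × D k` with `D k` a
cylinder of length `m k`, `diam (A k) ≤ 2^{-m k}` and `∑ 2^{-m k} < 1`. By the first moment method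
some `y ∈ C_I` satisfies `∑_{y ∈ D k} 2^{-|I ∩ m k|} < 1`, and the sets `A k` with `y ∈ D k` cover
`X`. Hall's theorem turns the last inequality into an injective enumeration of these sets in which
the index of `A k` is less than `2^{|I ∩ m k|}`; sparsity of `I` then makes `2^{-m k}` smaller than
the tolerance prescribed at that index.
-/

open scoped Topology

theorem exists_injective_pos_lt_of_tsum_inv_lt_one {ι : Type*} {N : ι → ℕ}
    (hN : ∑' i, (N i : ℝ≥0∞)⁻¹ < 1) :
    ∃ f : ι → ℕ, Function.Injective f ∧ ∀ i, 0 < f i ∧ f i < N i := by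
  suffices hall : ∀ s : Finset ι, s.card ≤ (s.biUnion fun i => Finset.Ioo 0 (N i)).card by
    simpa only [Finset.mem_Ioo] using
      (Finset.all_card_le_biUnion_card_iff_exists_injective _).1 hall
  intro s
  rcases s.eq_empty_or_nonempty with rfl | hs
  · simp
  obtain ⟨j, hj, hmax⟩ := s.exists_max_image N hs
  have hsum : s.card * (N j : ℝ≥0∞)⁻¹ < 1 :=
    calc s.card * (N j : ℝ≥0∞)⁻¹ = ∑ _i ∈ s, (N j : ℝ≥0∞)⁻¹ := by simp
      _ ≤ ∑ i ∈ s, (N i : ℝ≥0∞)⁻¹ :=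
        Finset.sum_le_sum fun i hi => ENNReal.inv_le_inv.2 (mod_cast hmax i hi)
      _ ≤ ∑' i, (N i : ℝ≥0∞)⁻¹ := ENNReal.sum_le_tsum s
      _ < 1 := hN
  have hcard : s.card < N j := by
    have hNj : (N j : ℝ≥0∞) ≠ 0 := fun h0 => by simp [h0, hs.ne_empty] at hsum
    rw [← div_eq_mul_inv, ENNReal.div_lt_iff (.inl hNj) (.inl (natCast_ne_top _)), one_mul] at hsum
    exact_mod_cast hsum
  calc s.card ≤ (Finset.Ioo 0 (N j)).card := by rw [Nat.card_Ioo]; lia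
    _ ≤ _ := Finset.card_le_card
      (Finset.subset_biUnion_of_mem (fun i => Finset.Ioo 0 (N i)) hj)

theorem exists_nat_cover_ediam_le {M ι : Type*} [PseudoEMetricSpace M] {X : Set M} {A : ι → Set M}
    (hX : X ⊆ ⋃ i, A i) {N : ι → ℕ} (hN : ∑' i, (N i : ℝ≥0∞)⁻¹ < 1) {ε : ℕ → ℝ≥0∞}
    (hε : ∀ i n, 0 < n → n < N i → Metric.ediam (A i) ≤ ε n) :
    ∃ U : ℕ → Set M, X ⊆ ⋃ n, U n ∧ ∀ n, Metric.ediam (U n) ≤ ε n := by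
  obtain ⟨f, hf, hfN⟩ := exists_injective_pos_lt_of_tsum_inv_lt_one hN
  refine ⟨Function.extend f A fun _ => ∅, hX.trans (iUnion_subset fun i => ?_), fun n => ?_⟩
  · exact subset_iUnion_of_subset (f i) (hf.extend_apply A _ i).ge
  · by_cases hn : ∃ i, f i = n
    · obtain ⟨i, rfl⟩ := hn
      rw [hf.extend_apply]
      exact hε i _ (hfN i).1 (hfN i).2
    · rw [Function.extend_apply' _ _ _ hn, Metric.ediam_empty]
      exact zero_le

open scoped Classical in
theorem exists_infinite_forall_le_of_count_pos (F : ℕ → ℕ) :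
    ∃ I : Set ℕ, I.Infinite ∧
      ∀ m, 0 < Nat.count (· ∈ I) m → F (Nat.count (· ∈ I) m) ≤ m := by
  obtain ⟨a, ha, haF⟩ := extraction_forall_of_eventually fun j => eventually_ge_atTop (F (j + 1))
  have hI : (range a).Infinite := infinite_range_of_injective ha.injective
  have hnth : ∀ j, Nat.nth (· ∈ range a) j = a j := fun j => by
    simpa only [mem_range_self, Nat.nth_true] using
      (Nat.nth_comp_of_strictMono ha (fun _ h => h) fun hfin => absurd hfin hI).symm
  refine ⟨range a, hI, fun m hm => ?_⟩
  obtain ⟨j, hj⟩ := Nat.exists_eq_add_one.2 hm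
  have haj : a j < m := hnth j ▸ Nat.nth_lt_of_lt_count (by lia)
  exact hj ▸ (haF j).trans haj.le

theorem exists_cover_tsum_lt_of_hausdorffMeasure_eq_zero {M : Type*} [EMetricSpace M]
    [MeasurableSpace M] [BorelSpace M] {d : ℝ} (hd : 0 < d) {S : Set M} (hS : μH[d] S = 0)
    {ε : ℝ≥0∞} (hε : ε ≠ 0) :
    ∃ (t : ℕ → Set M) (r : ℕ → ℝ≥0∞), S ⊆ ⋃ n, t n ∧ (∀ n, Metric.ediam (t n) ^ d < r n) ∧
      ∑' n, r n < ε := by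
  have hε2 : ε / 2 ≠ 0 := (ENNReal.half_pos hε).ne'
  obtain ⟨t, hSt, ht1, hsum⟩ : ∃ t : ℕ → Set M, S ⊆ ⋃ n, t n ∧ (∀ n, Metric.ediam (t n) ≤ 1) ∧
      ∑' n, ⨆ _ : (t n).Nonempty, Metric.ediam (t n) ^ d < ε / 2 := by
    rw [Measure.hausdorffMeasure_apply] at hS
    have h1 := iSup₂_eq_bot.1 hS 1 one_pos
    simpa only [iInf_lt_iff, exists_prop] using h1.trans_lt (bot_lt_iff_ne_bot.2 hε2)
  have hnonempty : ∀ n, ⨆ _ : (t n).Nonempty, Metric.ediam (t n) ^ d = Metric.ediam (t n) ^ d := by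
    intro n
    rcases (t n).eq_empty_or_nonempty with h | h <;> simp [h, hd]
  obtain ⟨δ, hδ, hδsum⟩ := ENNReal.exists_pos_sum_of_countable' hε2 ℕ
  refine ⟨t, fun n => Metric.ediam (t n) ^ d + δ n, hSt, fun n => ?_, ?_⟩
  · have hfin : Metric.ediam (t n) ^ d ≠ ∞ :=
      ENNReal.rpow_ne_top_of_nonneg hd.le ((ht1 n).trans_lt one_lt_top).ne
    exact ENNReal.lt_add_right hfin (hδ n).ne'
  · rw [ENNReal.tsum_add, ← ENNReal.add_halves ε]
    exact ENNReal.add_lt_add (by simpa only [hnonempty] using hsum) hδsum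

theorem hMeas_id_eq_hausdorffMeasure {M : Type*} [EMetricSpace M] [MeasurableSpace M]
    [BorelSpace M] : (hMeas fun r => r : Measure M) = μH[1] := by
  have heq : (fun r : ℝ≥0∞ => ENNReal.ofReal r.toReal) =ᶠ[𝓝 0] fun r => r ^ (1 : ℝ) := by
    filter_upwards [Iio_mem_nhds ENNReal.zero_lt_top] with r hr
    rw [ENNReal.ofReal_toReal hr.ne, ENNReal.rpow_one]
  exact le_antisymm (Measure.mkMetric_mono heq.le) (Measure.mkMetric_mono heq.symm.le)

theorem exists_section_cover_tsum_lt {α β ι : Type*} [Countable ι] [MeasurableSpace β]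
    {ν : Measure β} [IsProbabilityMeasure ν] {X : Set α} {C : Set β} (hC : ∀ᵐ y ∂ν, y ∈ C)
    {A : ι → Set α} {B : ι → Set β} (hB : ∀ i, MeasurableSet (B i))
    (hcov : X ×ˢ C ⊆ ⋃ i, A i ×ˢ B i) {w : ι → ℝ≥0∞} {c : ℝ≥0∞} (hw : ∑' i, w i * ν (B i) < c) :
    ∃ K : Set ι, X ⊆ ⋃ i : K, A i ∧ ∑' i : K, w i < c := by
  let f : β → ℝ≥0∞ := fun y => ∑' i, (B i).indicator (fun _ => w i) y
  have hmeas : ∀ i, Measurable ((B i).indicator fun _ => w i) :=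
    fun i => measurable_const.indicator (hB i)
  have hint : ∫⁻ y, f y ∂ν = ∑' i, w i * ν (B i) := by
    rw [lintegral_tsum fun i => (hmeas i).aemeasurable]
    exact tsum_congr fun i => lintegral_indicator_const (hB i) _
  obtain ⟨y, hyN, hy⟩ := exists_notMem_null_le_lintegral
    (f := f) (Measurable.tsum hmeas).aemeasurable hC
  have hyC : y ∈ C := not_not.1 hyN
  refine ⟨{i | y ∈ B i}, fun x hx => ?_, ?_⟩
  · obtain ⟨i, hxi, hyi⟩ := mem_iUnion.1 (hcov (mk_mem_prod hx hyC))
    exact mem_iUnion.2 ⟨⟨i, hyi⟩, hxi⟩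
  · calc ∑' i : {i | y ∈ B i}, w i = f y := tsum_subtype _ w
      _ ≤ ∫⁻ y, f y ∂ν := hy
      _ < c := hint.trans_lt hw

theorem exists_le_inv_two_pow_le_two_mul {r : ℝ≥0∞} (h0 : r ≠ 0) (h1 : r ≤ 1) :
    ∃ m : ℕ, r ≤ 2⁻¹ ^ m ∧ 2⁻¹ ^ m ≤ 2 * r := by
  classical
  have hex : ∃ n : ℕ, 2⁻¹ ^ n < r := ENNReal.exists_inv_two_pow_lt h0
  obtain ⟨m, hm⟩ : ∃ m, Nat.find hex = m + 1 :=
    Nat.exists_eq_add_one.2 ((Nat.find_pos hex).2 (by simpa using h1))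
  refine ⟨m, not_lt.1 (Nat.find_min hex (by lia)), ?_⟩
  calc (2⁻¹ : ℝ≥0∞) ^ m = 2 * 2⁻¹ ^ (m + 1) := by
        rw [pow_succ', ← mul_assoc, ENNReal.mul_inv_cancel two_ne_zero ofNat_ne_top, one_mul]
    _ ≤ 2 * r := by
        gcongr
        exact hm ▸ (Nat.find_spec hex).le

theorem exists_subset_cylinder_of_ediam_le {B : Set (ℕ → Bool)} {m : ℕ}
    (hB : Metric.ediam B ≤ 2⁻¹ ^ m) : ∃ q, B ⊆ PiNat.cylinder q m := by
  rcases B.eq_empty_or_nonempty with rfl | ⟨q, hq⟩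
  · exact ⟨fun _ => false, empty_subset _⟩
  refine ⟨q, fun y hy => PiNat.mem_cylinder_iff_dist_le.2 ?_⟩
  have hyq : edist y q ≤ 2⁻¹ ^ m := (Metric.edist_le_ediam_of_mem hy hq).trans hB
  have h2 : ENNReal.ofReal ((1 / 2) ^ m) = 2⁻¹ ^ m := by
    rw [ENNReal.ofReal_pow (by norm_num), one_div, ENNReal.ofReal_inv_of_pos two_pos,
      ENNReal.ofReal_ofNat]
  rwa [← h2, edist_dist, ENNReal.ofReal_le_ofReal_iff (by positivity)] at hyq

theorem exists_prod_cylinder_cover_of_hausdorffMeasure_eq_zero {M : Type*} [EMetricSpace M]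
    [MeasurableSpace M] [BorelSpace M] {S : Set (M × (ℕ → Bool))} (hS : μH[1] S = 0) :
    ∃ (A : ℕ → Set M) (q : ℕ → ℕ → Bool) (m : ℕ → ℕ),
      S ⊆ ⋃ k, A k ×ˢ PiNat.cylinder (q k) (m k) ∧ (∀ k, Metric.ediam (A k) ≤ 2⁻¹ ^ m k) ∧
      ∑' k, (2⁻¹ : ℝ≥0∞) ^ m k < 1 := by
  obtain ⟨t, r, hSt, htr, hr⟩ :=
    exists_cover_tsum_lt_of_hausdorffMeasure_eq_zero one_pos hS (ε := 2⁻¹) (by simp)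
  simp only [ENNReal.rpow_one] at htr
  have hr1 : ∀ k, r k ≤ 1 := fun k =>
    (ENNReal.le_tsum k).trans (hr.le.trans (ENNReal.inv_le_one.2 one_le_two))
  choose m hrm hmr using fun k => exists_le_inv_two_pow_le_two_mul (htr k).ne_bot (hr1 k)
  have htm : ∀ k, Metric.ediam (t k) ≤ 2⁻¹ ^ m k := fun k => (htr k).le.trans (hrm k)
  have hfst : ∀ k, Metric.ediam (Prod.fst '' t k) ≤ 2⁻¹ ^ m k := fun k =>
    (LipschitzWith.prod_fst.ediam_image_le _).trans (by simpa using htm k)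
  have hsnd : ∀ k, Metric.ediam (Prod.snd '' t k) ≤ 2⁻¹ ^ m k := fun k =>
    (LipschitzWith.prod_snd.ediam_image_le _).trans (by simpa using htm k)
  choose q hq using fun k => exists_subset_cylinder_of_ediam_le (hsnd k)
  refine ⟨fun k => Prod.fst '' t k, q, m, hSt.trans (iUnion_mono fun k => ?_), hfst, ?_⟩
  · exact fun x hx => ⟨mem_image_of_mem _ hx, hq k (mem_image_of_mem _ hx)⟩
  · calc ∑' k, (2⁻¹ : ℝ≥0∞) ^ m k ≤ ∑' k, 2 * r k := ENNReal.tsum_le_tsum hmr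
      _ = 2 * ∑' k, r k := ENNReal.tsum_mul_left
      _ < 2 * 2⁻¹ := ENNReal.mul_lt_mul_right two_ne_zero ofNat_ne_top hr
      _ = 1 := ENNReal.mul_inv_cancel two_ne_zero ofNat_ne_top

/-- The set `C_I` of points of Cantor space that vanish on `I`. -/
def vanishingOn (I : Set ℕ) : Set (ℕ → Bool) :=
  {x | ∀ i ∈ I, x i = false}

open scoped Classical in
/-- The law of the `i`-th coordinate of a uniform random point of `C_I`: constantly `false` if
`i ∈ I`, and a fair coin otherwise. -/
noncomputable def coordinateLaw (I : Set ℕ) (i : ℕ) : Measure Bool :=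
  if i ∈ I then Measure.dirac false else (PMF.uniformOfFintype Bool).toMeasure

/-- The uniform probability measure on `C_I`, as a product measure on Cantor space. -/
noncomputable def uniformVanishingOn (I : Set ℕ) : Measure (ℕ → Bool) :=
  Measure.infinitePi (coordinateLaw I)

section UniformVanishingOn

variable (I : Set ℕ)

instance (i : ℕ) : IsProbabilityMeasure (coordinateLaw I i) := by
  unfold coordinateLaw
  split_ifs <;> infer_instance

instance : IsProbabilityMeasure (uniformVanishingOn I) :=
  inferInstanceAs (IsProbabilityMeasure (Measure.infinitePi _))

theorem ae_mem_vanishingOn : ∀ᵐ y ∂uniformVanishingOn I, y ∈ vanishingOn I := by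
  refine ae_all_iff.2 fun i => ?_
  by_cases hi : i ∈ I
  · have hfalse : ∀ᵐ b ∂coordinateLaw I i, b = false := by simp [coordinateLaw, hi]
    filter_upwards [(measurePreserving_eval_infinitePi _ i).quasiMeasurePreserving.ae hfalse]
      with y hy _ using hy
  · exact ae_of_all _ fun _ h => absurd h hi

open scoped Classical in
theorem ite_inv_two_mul_coordinateLaw_singleton_le (i : ℕ) (b : Bool) :
    (if i ∈ I then 2⁻¹ else 1) * coordinateLaw I i {b} ≤ 2⁻¹ := by
  by_cases hi : i ∈ I
  · simpa only [if_pos hi] using mul_le_of_le_one_right' prob_le_one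
  · rw [if_neg hi, one_mul, coordinateLaw, if_neg hi,
      PMF.toMeasure_apply_singleton _ _ (measurableSet_singleton _)]
    simp

open scoped Classical in
theorem inv_two_pow_count_mul_uniformVanishingOn_cylinder_le (q : ℕ → Bool) (m : ℕ) :
    2⁻¹ ^ Nat.count (· ∈ I) m * uniformVanishingOn I (PiNat.cylinder q m) ≤ 2⁻¹ ^ m := by
  have hcount : (2⁻¹ : ℝ≥0∞) ^ Nat.count (· ∈ I) m =
      ∏ i ∈ Finset.range m, if i ∈ I then 2⁻¹ else 1 := by
    rw [← Finset.prod_filter, Finset.prod_const, Nat.count_eq_card_filter_range]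
  have hcyl : uniformVanishingOn I (PiNat.cylinder q m) =
      ∏ i ∈ Finset.range m, coordinateLaw I i {q i} := by
    rw [PiNat.cylinder_eq_pi]
    exact Measure.infinitePi_pi _ fun _ _ => measurableSet_singleton _
  rw [hcount, hcyl, ← Finset.prod_mul_distrib]
  simpa using Finset.prod_le_pow_card (Finset.range m) _ _ fun i _ =>
    ite_inv_two_mul_coordinateLaw_singleton_le I i (q i)

end UniformVanishingOn

open scoped Classical in
theorem exists_cover_tsum_inv_two_pow_count_lt_one {M : Type*} [EMetricSpace M]
    [MeasurableSpace M] [BorelSpace M] {X : Set M} {I : Set ℕ}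
    (hXI : μH[1] (X ×ˢ vanishingOn I) = 0) :
    ∃ (K : Set ℕ) (A : ℕ → Set M) (m : ℕ → ℕ), X ⊆ ⋃ k : K, A k ∧
      (∀ k, Metric.ediam (A k) ≤ 2⁻¹ ^ m k) ∧
      ∑' k : K, (2⁻¹ : ℝ≥0∞) ^ Nat.count (· ∈ I) (m k) < 1 := by
  obtain ⟨A, q, m, hcov, hA, hsum⟩ := exists_prod_cylinder_cover_of_hausdorffMeasure_eq_zero hXI
  obtain ⟨K, hK, hKsum⟩ := exists_section_cover_tsum_lt (ae_mem_vanishingOn I)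
    (fun k => (PiNat.isOpen_cylinder _ (q k) (m k)).measurableSet) hcov
    ((ENNReal.tsum_le_tsum fun k =>
      inv_two_pow_count_mul_uniformVanishingOn_cylinder_le I (q k) (m k)).trans_lt hsum)
  exact ⟨K, A, m, hK, hA, hKsum⟩

/-- Strong measure zero: for all positive reals `ε n` there is a cover by sets `U n` of diameter at
most `ε n`. Diameters are extended, so that an unbounded set does not get the junk value `0`. -/
def IsStrongMeasureZero {M : Type*} [PseudoEMetricSpace M] (X : Set M) : Prop :=
  ∀ ε : ℕ → ℝ, (∀ n, 0 < ε n) →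
    ∃ U : ℕ → Set M, X ⊆ (⋃ n, U n) ∧ ∀ n, Metric.ediam (U n) ≤ ENNReal.ofReal (ε n)

theorem stmt13_general {M : Type*} [EMetricSpace M] [MeasurableSpace M] [BorelSpace M] {X : Set M}
    (hyp : ∀ I : Set ℕ, I.Infinite → hMeas (fun r => r) (X ×ˢ vanishingOn I) = 0) :
    IsStrongMeasureZero X := by
  classical
  intro ε hε
  choose g hg using fun n => ENNReal.exists_inv_two_pow_lt (ENNReal.ofReal_pos.2 (hε n)).ne'
  obtain ⟨I, hI, hsparse⟩ :=
    exists_infinite_forall_le_of_count_pos fun c => (Finset.range (2 ^ c)).sup g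
  have hXI : μH[1] (X ×ˢ vanishingOn I) = 0 := by rw [← hMeas_id_eq_hausdorffMeasure, hyp I hI]
  obtain ⟨K, A, m, hX, hA, hsum⟩ := exists_cover_tsum_inv_two_pow_count_lt_one hXI
  refine exists_nat_cover_ediam_le hX (N := fun k : K => 2 ^ Nat.count (· ∈ I) (m k))
    (by simpa only [Nat.cast_pow, Nat.cast_ofNat, ENNReal.inv_pow] using hsum) fun k n hn0 hn => ?_
  have hcount : 0 < Nat.count (· ∈ I) (m k) := by
    refine Nat.pos_of_ne_zero fun h0 => ?_
    rw [h0, pow_zero] at hn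
    lia
  have hgm : g n ≤ m k := (Finset.le_sup (Finset.mem_range.2 hn)).trans (hsparse _ hcount)
  calc Metric.ediam (A k) ≤ 2⁻¹ ^ m k := hA k
    _ ≤ 2⁻¹ ^ g n := pow_le_pow_of_le_one zero_le (by simp) hgm
    _ ≤ ENNReal.ofReal (ε n) := (hg n).le

/-- If `X ⊆ 2^ℕ` satisfies `H^1(X × C_I) = 0` for every infinite `I ⊆ ℕ`, then `X` has
strong measure zero. -/
theorem stmt13 (X : Set (ℕ → Bool))
    (hyp : ∀ I : Set ℕ, I.Infinite →
      hMeas (fun r => r)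
        (X ×ˢ {x : ℕ → Bool | ∀ i ∈ I, x i = false}) = 0) :
    ∀ ε : ℕ → ℝ, (∀ n, 0 < ε n) →
      ∃ U : ℕ → Set (ℕ → Bool), X ⊆ (⋃ n, U n) ∧
        ∀ n, EMetric.diam (U n) ≤ ENNReal.ofReal (ε n) :=
  stmt13_general hyp
end
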